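/- arXiv:2212.10069 — 2 statements merged into one kernel-verified Lean document; each statement's English description precedes it below -/
import Mathlib

section
/- Let f be the infinite Fibonacci sequence and let n ≥ 2 and N ≥ 0 be integers. Then the N-factor complexity of f satisfies: P_f(n,N) = 0 if 0 ≤ N ≤ φ(n)−2; P_f(n,N) = F_{N+2} − n if N = φ(n)−1 or N = φ(n); P_f(n,N) = C_2·N² + C_1·N + C_0 if N ≥ φ(n)+1 and N+φ(n) is even; and P_f(n,N) = C_2·N² + C_1·N + C_0′ if N ≥ φ(n)+1 and N+φ(n) is odd, where C_2 = (n−1)/4, C_1 = (1/2)(F_{φ(n)+2} − (n−1)φ(n)), C_0 = (1 − φ(n)/2)·F_{φ(n)+2} + ((n−1)/4)·φ(n)² − n, and C_0′ = F_{φ(n)+1} + (1/2)(1−φ(n))·F_{φ(n)+2} + ((n−1)/4)·φ(n)² + (1−5n)/4. -/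
/-! The idea is to compare the factors of `f` with letters `≤ N + 2` with those with letters `≤ N`.

Write `F_s` for the Fibonacci numbers. The sequence `f` is self-similar: for `s ≥ 2`, the block
`f[F_s, F_{s+1})` is the prefix of `f` of the same length with all letters raised by `2`
(`fibSeq_add`). Hence raising a factor by `2` gives a factor, and a factor read in a window
`[i, i + n)` that lies within one block arises in this way. The other windows are those with some
Fibonacci number `F_s` in the interior, `i < F_s < i + n` (`Crosses`). Their words are

* never raised factors, since lowering `f(F_s) = 2` gives `0`, which occurs in `f` only at
  position `0` (`Crosses.ne_shift`);
* pairwise distinct: the letter `2` at the last boundary in the window does not recur after it, so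
  the word determines the offset of that boundary, and the letter `s - 1` just before `F_s`
  determines `s` (`Crosses.inj`);
* over the letters `≤ N` if and only if `i + n < F_{N+2}`, because the letter `N + 1` first occurs
  at position `F_{N+2} - 1` (`Crosses.bdd_iff`).

So `P(n, N + 2) = P(n, N) + D(n, N + 2)` and `P(n, N) = D(n, N)` for `N < 2`, where `D(n, N)` is
the number of crossing positions `i` with `i + n < F_{N+2}` (`Pc_add_two`, `Pc_small`). With
`k = φ(n)`, i.e. `F_k < n ≤ F_{k+1}`, an elementary count gives `D(n, N) = max(F_{N+2} - n, 0)` for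
`N ≤ k` and `D(n, N) = F_{k+2} + (n - 1)(N - k - 1)` for `N > k`. Summing over the residue class
of `N` modulo `2` yields the stated formulas. -/

/-- Number of occurrences of `w` as a contiguous factor of `y`
(number of starting positions `0 ≤ i ≤ |y|-1` where `w` occurs). -/
def occ (w y : List ℕ) : ℕ :=
  ((List.range y.length).filter (fun i => w.isPrefixOf (y.drop i))).length

/-- Base-`k` representation of `m`, most significant digit first, with `(0)_k = 0`. -/
def rep (k m : ℕ) : List ℕ := if m = 0 then [0] else (Nat.digits k m).reverse

/-- The `(k,w)`-digital sequence: number of occurrences of `w` in `(m)_k`. -/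
def dseq (k : ℕ) (w : List ℕ) (m : ℕ) : ℕ := occ w (rep k m)

/-- The set of factors of length `n` of the sequence `a` all of whose letters are `≤ N`. -/
def factorSet (a : ℕ → ℕ) (n N : ℕ) : Set (List ℕ) :=
  { u | (∃ i, u = (List.range n).map fun j => a (i + j)) ∧ ∀ x ∈ u, x ≤ N }

/-- The `N`-factor complexity `P_a(n,N)`. -/
noncomputable def Pc (a : ℕ → ℕ) (n N : ℕ) : ℕ := Nat.card (factorSet a n N)

/-- `F_a^{(1)}(n,N) = F_a(n,N) \ F_a(n,N-1)`. -/
def factorSet1 (a : ℕ → ℕ) (n N : ℕ) : Set (List ℕ) :=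
  factorSet a n N \ factorSet a n (N - 1)

/-- First difference of the `N`-factor complexity in the variable `N`. -/
noncomputable def Pc1 (a : ℕ → ℕ) (n N : ℕ) : ℤ := (Pc a n N : ℤ) - (Pc a n (N - 1) : ℤ)

/-- Second difference of the `N`-factor complexity in the variable `N`. -/
noncomputable def Pc2 (a : ℕ → ℕ) (n N : ℕ) : ℤ := Pc1 a n N - Pc1 a n (N - 1)

/-- The morphism `τ` on single letters: `τ(2i) = (2i)(2i+1)`, `τ(2i+1) = (2i+2)`. -/
def tauLetter (m : ℕ) : List ℕ := if m % 2 = 0 then [m, m + 1] else [m + 1]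

/-- The morphism `τ` extended to finite words by concatenation. -/
def tauWord (u : List ℕ) : List ℕ := u.flatMap tauLetter

/-- Fibonacci numbers with `F_0 = F_1 = 1`. -/
def fibW : ℕ → ℕ
  | 0 => 1
  | 1 => 1
  | n + 2 => fibW (n + 1) + fibW n

/-- `φ(n) = max {k : F_k < n}`. -/
noncomputable def phi (n : ℕ) : ℕ := sSup {k | fibW k < n}

/-- The infinite Fibonacci sequence `f = τ^∞(0)`: since `τ^{p}(0)` is a prefix of
`τ^{p+1}(0)` and `|τ^{n+1}(0)| = F_{n+2} > n`, the `n`-th letter of the fixed point is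
the `n`-th letter of `τ^{n+1}(0)`. -/
def fibSeq (n : ℕ) : ℕ := (tauWord^[n + 1] [0]).getD n 0

/-- The set of factors of length `n` of a finite word `u` all of whose letters are `≤ N`. -/
def factorSetW (u : List ℕ) (n N : ℕ) : Set (List ℕ) :=
  { v | v.length = n ∧ v <:+: u ∧ ∀ x ∈ v, x ≤ N }

/-! ### Fibonacci numbers -/

theorem fibW_add_two (k : ℕ) : fibW (k + 2) = fibW (k + 1) + fibW k := rfl

theorem fibW_pos (k : ℕ) : 0 < fibW k := by
  induction k using Nat.twoStepInduction with
  | zero => decide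
  | one => decide
  | more k h1 h2 => rw [fibW_add_two]; omega

theorem fibW_le_succ (k : ℕ) : fibW k ≤ fibW (k + 1) := by
  cases k with
  | zero => decide
  | succ k => rw [fibW_add_two]; omega

theorem fibW_mono : Monotone fibW := monotone_nat_of_le_succ fibW_le_succ

theorem lt_fibW_add_two (k : ℕ) : k < fibW (k + 2) := by
  induction k with
  | zero => decide
  | succ k ih =>
    have h1 : fibW (k + 1 + 2) = fibW (k + 2) + fibW (k + 1) := rfl
    have := fibW_pos (k + 1)
    omega

theorem le_fibW (k : ℕ) : k ≤ fibW k := by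
  induction k using Nat.twoStepInduction with
  | zero => decide
  | one => decide
  | more k _ h =>
    have := fibW_pos k
    rw [fibW_add_two]
    omega

/-- The first step of the greedy (Zeckendorf) expansion: subtract the largest Fibonacci number. -/
theorem exists_greedy (m : ℕ) (hm : 2 ≤ m) :
    ∃ s j, m = fibW (s + 2) + j ∧ j < fibW (s + 1) := by
  classical
  have hex : ∃ t, m < fibW (t + 2) := ⟨m, lt_fibW_add_two m⟩
  have h1 := Nat.find_spec hex
  have h2 : ∀ t, t < Nat.find hex → ¬ m < fibW (t + 2) := fun t ht => Nat.find_min hex ht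
  generalize Nat.find hex = t at h1 h2
  rcases t with _ | t
  · have : fibW (0 + 2) = 2 := rfl
    omega
  · have h3 := h2 t (by omega)
    have h4 : fibW (t + 1 + 2) = fibW (t + 2) + fibW (t + 1) := rfl
    exact ⟨t, m - fibW (t + 2), by omega, by omega⟩

theorem phi_spec (n : ℕ) (hn : 2 ≤ n) :
    1 ≤ phi n ∧ fibW (phi n) < n ∧ n ≤ fibW (phi n + 1) := by
  have hb : BddAbove {k | fibW k < n} :=
    ⟨n, fun k hk => by have := le_fibW k; simp only [Set.mem_ofPred_eq] at hk; omega⟩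
  have h1 : 1 ∈ {k | fibW k < n} := by
    have : fibW 1 = 1 := rfl
    simp only [Set.mem_ofPred_eq]; omega
  refine ⟨le_csSup hb h1, Nat.sSup_mem ⟨1, h1⟩ hb, ?_⟩
  by_contra hlt
  have : phi n + 1 ≤ phi n := le_csSup hb (show phi n + 1 ∈ {k | fibW k < n} by simpa using hlt)
  omega

/-! ### Letters of the Fibonacci sequence -/

/-- The finite Fibonacci word `τ^k(0)`, of length `F_{k+1}`. -/
def fibWord (k : ℕ) : List ℕ := tauWord^[k] [0]

theorem tauWord_append (u v : List ℕ) : tauWord (u ++ v) = tauWord u ++ tauWord v := by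
  simp [tauWord]

theorem tauWord_map_add_two (u : List ℕ) :
    tauWord (u.map (· + 2)) = (tauWord u).map (· + 2) := by
  induction u with
  | nil => rfl
  | cons a u ih =>
    have h : tauLetter (a + 2) = (tauLetter a).map (· + 2) := by
      unfold tauLetter
      by_cases ha : a % 2 = 0 <;> simp [ha]
    simp only [tauWord, List.map_cons, List.flatMap_cons, List.map_append] at ih ⊢
    rw [ih, h]

theorem fibWord_succ (k : ℕ) : fibWord (k + 1) = tauWord (fibWord k) :=
  Function.iterate_succ_apply' _ _ _

theorem fibWord_add_two (k : ℕ) :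
    fibWord (k + 2) = fibWord (k + 1) ++ (fibWord k).map (· + 2) := by
  induction k with
  | zero => decide
  | succ k ih =>
    rw [fibWord_succ (k + 2)]
    nth_rewrite 1 [ih]
    rw [tauWord_append, tauWord_map_add_two, ← fibWord_succ, ← fibWord_succ]

theorem length_fibWord (k : ℕ) : (fibWord k).length = fibW (k + 1) := by
  induction k using Nat.twoStepInduction with
  | zero => rfl
  | one => rfl
  | more k h1 h2 => rw [fibWord_add_two, List.length_append, List.length_map, h1, h2]; rfl

theorem fibWord_prefix {k l : ℕ} (h : k ≤ l) : fibWord k <+: fibWord l := by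
  induction l, h using Nat.le_induction with
  | base => exact List.prefix_refl _
  | succ l _ ih =>
    refine ih.trans ?_
    rcases l with _ | l
    · exact ⟨[1], rfl⟩
    · rw [fibWord_add_two]; exact List.prefix_append _ _

theorem getD_of_prefix {u v : List ℕ} (h : u <+: v) {m : ℕ} (hm : m < u.length) :
    u.getD m 0 = v.getD m 0 := by
  obtain ⟨t, rfl⟩ := h
  rw [List.getD_append _ _ _ _ hm]

theorem fibSeq_eq_getD (k m : ℕ) (hm : m < fibW (k + 1)) :
    fibSeq m = (fibWord k).getD m 0 := by
  have h1 : m < (fibWord (m + 1)).length := by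
    rw [length_fibWord]; exact lt_fibW_add_two m
  have h2 : m < (fibWord k).length := by rwa [length_fibWord]
  change (fibWord (m + 1)).getD m 0 = _
  rcases le_total (m + 1) k with h | h
  · exact getD_of_prefix (fibWord_prefix h) h1
  · exact (getD_of_prefix (fibWord_prefix h) h2).symm

theorem fibSeq_zero : fibSeq 0 = 0 := rfl

theorem fibSeq_one : fibSeq 1 = 1 := rfl

/-- The self-similarity of `f`: the block of length `F_{s+1}` starting at `F_{s+2}` is the prefix
of `f` of that length with all letters raised by `2`. -/
theorem fibSeq_add (s j : ℕ) (hj : j < fibW (s + 1)) :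
    fibSeq (fibW (s + 2) + j) = fibSeq j + 2 := by
  have h3 : fibW (s + 2 + 1) = fibW (s + 2) + fibW (s + 1) := rfl
  rw [fibSeq_eq_getD (s + 2) _ (by omega), fibSeq_eq_getD s j hj, fibWord_add_two,
    List.getD_append_right _ _ _ _ (by rw [length_fibWord]; exact Nat.le_add_right _ _),
    length_fibWord]
  have h4 : fibW (s + 2) + j - fibW (s + 1 + 1) = j := by
    change fibW (s + 2) + j - fibW (s + 2) = j
    omega
  have h5 : j < (fibWord s).length := by rwa [length_fibWord]
  rw [h4, List.getD_eq_getElem _ _ h5, List.getD_eq_getElem _ _ (by simpa using h5)]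
  simp

theorem fibSeq_eq_zero {m : ℕ} (h : fibSeq m = 0) : m = 0 := by
  by_contra h0
  by_cases h1 : m = 1
  · subst h1; exact absurd h (by decide)
  · obtain ⟨s, j, rfl, hj⟩ := exists_greedy m (by omega)
    rw [fibSeq_add s j hj] at h
    omega

theorem fibSeq_fibW (s : ℕ) : fibSeq (fibW (s + 2)) = 2 := by
  have := fibSeq_add s 0 (fibW_pos _)
  simpa [fibSeq_zero] using this

theorem fibSeq_fibW_le (s : ℕ) : fibSeq (fibW s) < 2 ∨ fibSeq (fibW s) = 2 := by
  rcases s with _ | _ | s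
  · left; decide
  · left; decide
  · right; exact fibSeq_fibW s

/-- The last letter of `τ^k(0)` is `k`. -/
theorem fibSeq_last (k m : ℕ) (h : m + 1 = fibW (k + 1)) : fibSeq m = k := by
  induction k using Nat.twoStepInduction generalizing m with
  | zero =>
    have h1 : fibW (0 + 1) = 1 := rfl
    obtain rfl : m = 0 := by omega
    rfl
  | one =>
    have h1 : fibW (1 + 1) = 2 := rfl
    obtain rfl : m = 1 := by omega
    rfl
  | more k ih _ =>
    have h1 : fibW (k + 2 + 1) = fibW (k + 2) + fibW (k + 1) := rfl
    have h2 := fibW_pos (k + 1)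
    have h3 := ih (fibW (k + 1) - 1) (by omega)
    have h4 := fibSeq_add k (fibW (k + 1) - 1) (by omega)
    rw [h3] at h4
    rw [← h4]
    congr 1
    omega

/-- All letters of `τ^k(0)` but the last are smaller than `k`. -/
theorem fibSeq_lt (k m : ℕ) (h : m + 1 < fibW (k + 1)) : fibSeq m < k := by
  induction k using Nat.twoStepInduction generalizing m with
  | zero => have h1 : fibW (0 + 1) = 1 := rfl; omega
  | one =>
    have h1 : fibW (1 + 1) = 2 := rfl
    obtain rfl : m = 0 := by omega
    decide
  | more k ih1 ih2 =>
    have h1 : fibW (k + 2 + 1) = fibW (k + 2) + fibW (k + 1) := rfl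
    have h0 : fibW (k + 1 + 1) = fibW (k + 2) := rfl
    rcases lt_trichotomy (m + 1) (fibW (k + 2)) with h2 | h2 | h2
    · have := ih2 m h2; omega
    · have := fibSeq_last (k + 1) m h2; omega
    · have h3 := ih1 (m - fibW (k + 2)) (by omega)
      have h4 := fibSeq_add k (m - fibW (k + 2)) (by omega)
      rw [show fibW (k + 2) + (m - fibW (k + 2)) = m by omega] at h4
      omega

/-! ### Windows crossing a Fibonacci boundary -/

/-- The factor of length `n` of `f` starting at position `i`. -/
def window (n i : ℕ) : List ℕ := (List.range n).map fun j => fibSeq (i + j)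

/-- The window `[i, i + n)` has a Fibonacci number in its interior, so that it is not contained in
one of the blocks `[F_s, F_{s+1})`. -/
def Crosses (n i : ℕ) : Prop := ∃ s, i < fibW s ∧ fibW s < i + n

theorem window_eq_iff {n i : ℕ} {a : ℕ → ℕ} :
    window n i = (List.range n).map a ↔ ∀ t < n, fibSeq (i + t) = a t := by
  simp [window, List.map_inj_left]

theorem map_window (n i : ℕ) :
    (window n i).map (· + 2) = (List.range n).map fun t => fibSeq (i + t) + 2 := by
  simp [window, Function.comp_def]

theorem window_bdd_iff {n i N : ℕ} :
    (∀ x ∈ window n i, x ≤ N) ↔ ∀ t < n, fibSeq (i + t) ≤ N := by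
  simp [window]

theorem exists_shift_of_not_crosses {n i : ℕ} (hn : 2 ≤ n) (h : ¬ Crosses n i) :
    ∃ j, window n i = (window n j).map (· + 2) := by
  have hi : 2 ≤ i := by
    by_contra hi
    apply h
    have h1 : fibW 1 = 1 := rfl
    have h2 : fibW 2 = 2 := rfl
    rcases (show i = 0 ∨ i = 1 by omega) with rfl | rfl
    · exact ⟨1, by omega, by omega⟩
    · exact ⟨2, by omega, by omega⟩
  obtain ⟨s, j, rfl, hj⟩ := exists_greedy i hi
  have h3 : fibW (s + 3) = fibW (s + 2) + fibW (s + 1) := rfl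
  have h4 : fibW (s + 2) + j + n ≤ fibW (s + 3) := by
    by_contra h5
    exact h ⟨s + 3, by omega, by omega⟩
  refine ⟨j, ?_⟩
  rw [map_window, window_eq_iff]
  intro t ht
  rw [add_assoc]
  exact fibSeq_add s (j + t) (by omega)

theorem exists_window_eq_shift (n j : ℕ) : ∃ i, window n i = (window n j).map (· + 2) := by
  refine ⟨fibW (j + n + 2) + j, ?_⟩
  rw [map_window, window_eq_iff]
  intro t ht
  rw [add_assoc]
  have := le_fibW (j + n + 1)
  exact fibSeq_add _ (j + t) (by omega)

/-- A crossing window has, past its first letter, the letter `2` (or starts with `01`), whereas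
lowering by `2` would produce a `0`, which occurs only at the start of `f`. -/
theorem Crosses.ne_shift {n i : ℕ} (h : Crosses n i) (j : ℕ) :
    window n i ≠ (window n j).map (· + 2) := by
  rw [map_window, Ne, window_eq_iff]
  intro he
  obtain ⟨s, h1, h2⟩ := h
  have h3 := he (fibW s - i) (by omega)
  rw [show i + (fibW s - i) = fibW s by omega] at h3
  rcases fibSeq_fibW_le s with h4 | h4
  · omega
  · have := fibSeq_eq_zero (show fibSeq (j + (fibW s - i)) = 0 by omega)
    omega

/-- The last boundary inside a crossing window. -/
theorem Crosses.exists_last {n i : ℕ} (h : Crosses n i) (hi : 1 ≤ i) :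
    ∃ s, i < fibW (s + 2) ∧ fibW (s + 2) < i + n ∧ i + n ≤ fibW (s + 3) := by
  obtain ⟨s', h1, h2⟩ := h
  obtain ⟨s, j, h3, h4⟩ := exists_greedy (i + n - 1) (by omega)
  have h5 : fibW (s + 3) = fibW (s + 2) + fibW (s + 1) := rfl
  refine ⟨s, ?_, by omega, by omega⟩
  by_contra h6
  have h7 : fibW s' ≤ fibW (s + 2) := by
    apply fibW_mono
    by_contra h8
    have := fibW_mono (show s + 3 ≤ s' by omega)
    omega
  omega

theorem Crosses.inj {n i i' : ℕ} (h : Crosses n i) (h' : Crosses n i')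
    (he : window n i = window n i') : i = i' := by
  replace he : ∀ t < n, fibSeq (i + t) = fibSeq (i' + t) := window_eq_iff.1 he
  have hn : 0 < n := by obtain ⟨s, h1, h2⟩ := h; omega
  have he0 := he 0 hn
  rcases Nat.eq_zero_or_pos i with rfl | hi
  · exact (fibSeq_eq_zero he0.symm).symm
  rcases Nat.eq_zero_or_pos i' with rfl | hi'
  · exact fibSeq_eq_zero he0
  obtain ⟨s, h1, h2, h3⟩ := h.exists_last hi
  obtain ⟨s', h1', h2', h3'⟩ := h'.exists_last hi'
  have h5' : fibW (s' + 3) = fibW (s' + 2) + fibW (s' + 1) := rfl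
  have h5 : fibW (s + 3) = fibW (s + 2) + fibW (s + 1) := rfl
  -- Past the last boundary the letter `2` does not recur, so the offsets of the boundaries agree.
  rcases lt_trichotomy (fibW (s + 2) - i) (fibW (s' + 2) - i') with hlt | heq | hlt
  · have h6 := he (fibW (s' + 2) - i') (by omega)
    rw [show i' + (fibW (s' + 2) - i') = fibW (s' + 2) by omega, fibSeq_fibW,
      show i + (fibW (s' + 2) - i') =
        fibW (s + 2) + (fibW (s' + 2) - i' - (fibW (s + 2) - i)) by omega,
      fibSeq_add _ _ (by omega)] at h6
    have := fibSeq_eq_zero (Nat.add_eq_right.1 h6)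
    omega
  · have h6 := he (fibW (s + 2) - i - 1) (by omega)
    rw [fibSeq_last (s + 1) (i + (fibW (s + 2) - i - 1))
        (show _ = fibW (s + 2) by omega),
      fibSeq_last (s' + 1) (i' + (fibW (s + 2) - i - 1))
        (show _ = fibW (s' + 2) by omega)] at h6
    obtain rfl : s = s' := by omega
    omega
  · have h6 := he (fibW (s + 2) - i) (by omega)
    rw [show i + (fibW (s + 2) - i) = fibW (s + 2) by omega, fibSeq_fibW,
      show i' + (fibW (s + 2) - i) =
        fibW (s' + 2) + (fibW (s + 2) - i - (fibW (s' + 2) - i')) by omega,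
      fibSeq_add _ _ (by omega)] at h6
    have := fibSeq_eq_zero (Nat.add_eq_right.1 h6.symm)
    omega

theorem Crosses.bdd_iff {n i N : ℕ} (h : Crosses n i) :
    (∀ x ∈ window n i, x ≤ N) ↔ i + n < fibW (N + 2) := by
  rw [window_bdd_iff]
  constructor
  · intro hb
    by_contra hlt
    obtain ⟨s, h1, h2⟩ := h
    by_cases hi : i < fibW (N + 2)
    · have h3 := hb (fibW (N + 2) - 1 - i) (by omega)
      rw [fibSeq_last (N + 1) _ (show _ = fibW (N + 2) by omega)] at h3
      omega
    · have hs : N + 2 < s := by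
        by_contra hs
        have := fibW_mono (show s ≤ N + 2 by omega)
        omega
      obtain ⟨r, rfl⟩ : ∃ r, s = r + 1 := ⟨s - 1, by omega⟩
      have h3 := hb (fibW (r + 1) - 1 - i) (by omega)
      rw [fibSeq_last r _ (by omega)] at h3
      omega
  · intro hlt t ht
    have := fibSeq_lt (N + 1) (i + t) (show _ < fibW (N + 2) by omega)
    omega

/-! ### The recurrence `P(n, N + 2) = P(n, N) + D(n, N + 2)` -/

open Classical in
/-- Starting positions of the crossing windows of length `n` with all letters `≤ N`. -/
noncomputable def crossSet (n N : ℕ) : Finset ℕ :=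
  (Finset.range (fibW (N + 2))).filter fun i => i + n < fibW (N + 2) ∧ Crosses n i

theorem mem_crossSet {n N i : ℕ} :
    i ∈ crossSet n N ↔ i + n < fibW (N + 2) ∧ Crosses n i := by
  simp only [crossSet, Finset.mem_filter, Finset.mem_range]
  constructor
  · exact fun h => h.2
  · exact fun h => ⟨by omega, h⟩

theorem mem_factorSet {n N : ℕ} {u : List ℕ} :
    u ∈ factorSet fibSeq n N ↔ (∃ i, u = window n i) ∧ ∀ x ∈ u, x ≤ N := Iff.rfl

theorem window_injOn (n N : ℕ) : Set.InjOn (window n) (crossSet n N : Set ℕ) :=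
  fun _ hi _ hj he => (mem_crossSet.1 hi).2.inj (mem_crossSet.1 hj).2 he

theorem ncard_image_crossSet (n N : ℕ) :
    (window n '' (crossSet n N : Set ℕ)).ncard = (crossSet n N).card := by
  rw [Set.InjOn.ncard_image (window_injOn n N), Set.ncard_coe_finset]

theorem factorSet_small {n N : ℕ} (hn : 2 ≤ n) (hN : N < 2) :
    factorSet fibSeq n N = window n '' (crossSet n N : Set ℕ) := by
  ext u
  rw [mem_factorSet]
  constructor
  · rintro ⟨⟨i, rfl⟩, hb⟩
    by_cases hc : Crosses n i
    · exact ⟨i, mem_crossSet.2 ⟨hc.bdd_iff.1 hb, hc⟩, rfl⟩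
    · obtain ⟨j, hj⟩ := exists_shift_of_not_crosses hn hc
      rw [map_window, window_eq_iff] at hj
      have h1 := hj 0 (by omega)
      have h2 := window_bdd_iff.1 hb 0 (by omega)
      omega
  · rintro ⟨i, hi, rfl⟩
    have := mem_crossSet.1 hi
    exact ⟨⟨i, rfl⟩, this.2.bdd_iff.2 this.1⟩

theorem factorSet_add_two {n N : ℕ} (hn : 2 ≤ n) :
    factorSet fibSeq n (N + 2) =
      (List.map (· + 2)) '' factorSet fibSeq n N ∪ window n '' (crossSet n (N + 2) : Set ℕ) := by
  ext u
  rw [mem_factorSet]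
  constructor
  · rintro ⟨⟨i, rfl⟩, hb⟩
    by_cases hc : Crosses n i
    · exact Or.inr ⟨i, mem_crossSet.2 ⟨hc.bdd_iff.1 hb, hc⟩, rfl⟩
    · obtain ⟨j, hj⟩ := exists_shift_of_not_crosses hn hc
      refine Or.inl ⟨window n j, mem_factorSet.2 ⟨⟨j, rfl⟩, ?_⟩, hj.symm⟩
      rw [hj] at hb
      intro x hx
      have := hb (x + 2) (List.mem_map_of_mem hx)
      omega
  · rintro (⟨v, hv, rfl⟩ | ⟨i, hi, rfl⟩)
    · obtain ⟨⟨j, rfl⟩, hb⟩ := mem_factorSet.1 hv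
      obtain ⟨i, hi⟩ := exists_window_eq_shift n j
      refine ⟨⟨i, hi.symm⟩, ?_⟩
      intro x hx
      obtain ⟨y, hy, rfl⟩ := List.mem_map.1 hx
      have := hb y hy
      omega
    · have := mem_crossSet.1 hi
      exact ⟨⟨i, rfl⟩, this.2.bdd_iff.2 this.1⟩

theorem factorSet_finite {n : ℕ} (hn : 2 ≤ n) (N : ℕ) : (factorSet fibSeq n N).Finite := by
  induction N using Nat.twoStepInduction with
  | zero => rw [factorSet_small hn (by omega)]; exact (Finset.finite_toSet _).image _
  | one => rw [factorSet_small hn (by omega)]; exact (Finset.finite_toSet _).image _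
  | more N ih _ =>
    rw [factorSet_add_two hn]
    exact (ih.image _).union ((Finset.finite_toSet _).image _)

theorem Pc_small {n N : ℕ} (hn : 2 ≤ n) (hN : N < 2) :
    Pc fibSeq n N = (crossSet n N).card := by
  rw [Pc, factorSet_small hn hN, Nat.card_coe_set_eq, ncard_image_crossSet]

theorem Pc_add_two {n N : ℕ} (hn : 2 ≤ n) :
    Pc fibSeq n (N + 2) = Pc fibSeq n N + (crossSet n (N + 2)).card := by
  have hinj : Function.Injective (List.map (· + 2 : ℕ → ℕ)) :=
    List.map_injective_iff.2 (add_left_injective 2)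
  rw [Pc, Pc, factorSet_add_two hn, Nat.card_coe_set_eq, Nat.card_coe_set_eq,
    Set.ncard_union_eq ?_ ((factorSet_finite hn N).image _) ((Finset.finite_toSet _).image _),
    ncard_image_crossSet, Set.ncard_image_of_injective _ hinj]
  · rw [Set.disjoint_left]
    rintro _ ⟨v, hv, rfl⟩ ⟨i, hi, he⟩
    obtain ⟨⟨j, rfl⟩, -⟩ := mem_factorSet.1 hv
    exact (mem_crossSet.1 hi).2.ne_shift j he

/-! ### Counting crossing windows

Throughout, `k` stands for `φ(n)`, that is `F_k < n ≤ F_{k+1}`. -/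

theorem crosses_of_lt {n k i : ℕ} (hk : 1 ≤ k) (h1 : fibW k < n) (hi : i < fibW (k + 2)) :
    Crosses n i := by
  obtain ⟨r, rfl⟩ : ∃ r, k = r + 1 := ⟨k - 1, by omega⟩
  have e1 : fibW (r + 1 + 1) = fibW (r + 1) + fibW r := rfl
  have e2 : fibW (r + 1 + 2) = fibW (r + 1 + 1) + fibW (r + 1) := rfl
  have e3 := fibW_le_succ r
  by_cases c1 : i < fibW (r + 1)
  · exact ⟨r + 1, by omega, by omega⟩
  by_cases c2 : i < fibW (r + 1 + 1)
  · exact ⟨r + 1 + 1, by omega, by omega⟩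
  · exact ⟨r + 1 + 2, by omega, by omega⟩

/-- A window inside a block `[F_s, F_{s+1}]` crosses no boundary. -/
theorem not_crosses {n i s : ℕ} (h1 : fibW s ≤ i) (h2 : i + n ≤ fibW (s + 1)) :
    ¬ Crosses n i := by
  rintro ⟨t, h3, h4⟩
  rcases Nat.lt_or_ge s t with h | h
  · have := fibW_mono (show s + 1 ≤ t by omega); omega
  · have := fibW_mono h; omega

theorem card_crossSet_le {n k N : ℕ} (hk : 1 ≤ k) (h1 : fibW k < n) (hN : N ≤ k) :
    (crossSet n N).card = fibW (N + 2) - n := by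
  have : crossSet n N = Finset.range (fibW (N + 2) - n) := by
    ext i
    rw [mem_crossSet, Finset.mem_range]
    constructor
    · rintro ⟨h, -⟩; omega
    · intro h
      have := fibW_mono (show N + 2 ≤ k + 2 by omega)
      exact ⟨by omega, crosses_of_lt hk h1 (by omega)⟩
  rw [this, Finset.card_range]

theorem card_crossSet_succ {n k : ℕ} (hk : 1 ≤ k) (h1 : fibW k < n) (h2 : n ≤ fibW (k + 1)) :
    (crossSet n (k + 1)).card = fibW (k + 2) := by
  have e : fibW (k + 1 + 2) = fibW (k + 2) + fibW (k + 1) := rfl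
  have : crossSet n (k + 1) = Finset.range (fibW (k + 2)) := by
    ext i
    rw [mem_crossSet, Finset.mem_range]
    constructor
    · rintro ⟨h, hc⟩
      by_contra hi
      exact not_crosses (s := k + 2) (by omega) (show _ ≤ fibW (k + 1 + 2) by omega) hc
    · intro h
      exact ⟨by omega, crosses_of_lt hk h1 h⟩
  rw [this, Finset.card_range]

/-- Raising `N` by one past `φ(n) + 1` adds the `n - 1` windows crossing `F_{N+2}`. -/
theorem card_crossSet_step {n k N : ℕ} (hn : 2 ≤ n) (h2 : n ≤ fibW (k + 1)) (hN : k + 1 ≤ N) :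
    (crossSet n (N + 1)).card = (crossSet n N).card + (n - 1) := by
  have e1 : fibW (N + 1 + 2) = fibW (N + 2) + fibW (N + 1) := rfl
  have e2 : fibW (N + 2) = fibW (N + 1) + fibW N := rfl
  have e3 := fibW_mono hN
  have e4 := fibW_le_succ N
  have hun : crossSet n (N + 1) =
      crossSet n N ∪ Finset.Ioo (fibW (N + 2) - n) (fibW (N + 2)) := by
    ext i
    rw [Finset.mem_union, mem_crossSet, mem_crossSet, Finset.mem_Ioo]
    constructor
    · rintro ⟨h, hc⟩
      by_cases h3 : i + n < fibW (N + 2)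
      · exact Or.inl ⟨h3, hc⟩
      · right
        constructor
        · by_contra h4
          exact not_crosses (s := N + 1) (by omega) (show _ ≤ fibW (N + 2) by omega) hc
        · by_contra h4
          exact not_crosses (s := N + 2) (by omega) (show _ ≤ fibW (N + 1 + 2) by omega) hc
    · rintro (⟨h, hc⟩ | ⟨h3, h4⟩)
      · exact ⟨by omega, hc⟩
      · exact ⟨by omega, N + 2, h4, by omega⟩
  rw [hun, Finset.card_union_of_disjoint, Nat.card_Ioo]
  · omega
  · rw [Finset.disjoint_left]
    intro i hi hi'
    have := (mem_crossSet.1 hi).1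
    have := (Finset.mem_Ioo.1 hi').1
    omega

theorem card_crossSet_add {n k : ℕ} (hn : 2 ≤ n) (hk : 1 ≤ k) (h1 : fibW k < n)
    (h2 : n ≤ fibW (k + 1)) (r : ℕ) :
    (crossSet n (k + 1 + r)).card = fibW (k + 2) + (n - 1) * r := by
  induction r with
  | zero => simpa using card_crossSet_succ hk h1 h2
  | succ r ih =>
    rw [← add_assoc, card_crossSet_step hn h2 (by omega), ih]
    ring

/-! ### Values of the complexity -/

theorem Pc_eq_zero {n k : ℕ} (hn : 2 ≤ n) (hk : 1 ≤ k) (h1 : fibW k < n) (N : ℕ)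
    (hN : N + 2 ≤ k) : Pc fibSeq n N = 0 := by
  have hc : ∀ M, M + 2 ≤ k → (crossSet n M).card = 0 := fun M hM => by
    have := fibW_mono hM
    rw [card_crossSet_le hk h1 (by omega)]
    omega
  induction N using Nat.twoStepInduction with
  | zero => rw [Pc_small hn (by omega), hc _ hN]
  | one => rw [Pc_small hn (by omega), hc _ hN]
  | more N ih _ => rw [Pc_add_two hn, ih (by omega), hc _ hN]

theorem Pc_eq_card {n k N : ℕ} (hn : 2 ≤ n) (hk : 1 ≤ k) (h1 : fibW k < n) (hN : N ≤ k) :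
    Pc fibSeq n N = fibW (N + 2) - n := by
  rw [← card_crossSet_le hk h1 hN]
  rcases N with _ | _ | N
  · exact Pc_small hn (by omega)
  · exact Pc_small hn (by omega)
  · rw [Pc_add_two hn, Pc_eq_zero hn hk h1 N hN, zero_add]

theorem Pc_even {n k : ℕ} (hn : 2 ≤ n) (hk : 1 ≤ k) (h1 : fibW k < n)
    (h2 : n ≤ fibW (k + 1)) (r : ℕ) :
    (Pc fibSeq n (k + 2 * r) : ℚ) = fibW (k + 2) - n + r * fibW (k + 2) + (n - 1) * r ^ 2 := by
  induction r with
  | zero =>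
    have := fibW_le_succ (k + 1)
    rw [show k + 2 * 0 = k by omega, Pc_eq_card hn hk h1 le_rfl, Nat.cast_sub (h2.trans this)]
    simp
  | succ r ih =>
    rw [show k + 2 * (r + 1) = k + 2 * r + 2 by ring, Pc_add_two hn,
      show k + 2 * r + 2 = k + 1 + (2 * r + 1) by ring, card_crossSet_add hn hk h1 h2]
    push_cast [Nat.cast_sub (show 1 ≤ n by omega)]
    rw [ih]
    ring

theorem Pc_odd {n k : ℕ} (hn : 2 ≤ n) (hk : 1 ≤ k) (h1 : fibW k < n)
    (h2 : n ≤ fibW (k + 1)) (r : ℕ) :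
    (Pc fibSeq n (k + 1 + 2 * r) : ℚ) =
      fibW (k + 1) - n + (r + 1) * fibW (k + 2) + (n - 1) * (r ^ 2 + r) := by
  induction r with
  | zero =>
    obtain ⟨m, rfl⟩ : ∃ m, k = m + 1 := ⟨k - 1, by omega⟩
    rw [show m + 1 + 1 + 2 * 0 = m + 2 by omega, Pc_add_two hn,
      Pc_eq_card hn hk h1 (by omega),
      show (crossSet n (m + 2)).card = fibW (m + 1 + 2) from card_crossSet_succ hk h1 h2]
    push_cast [Nat.cast_sub (show n ≤ fibW (m + 2) from h2)]
    ring
  | succ r ih =>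
    rw [show k + 1 + 2 * (r + 1) = k + 1 + 2 * r + 2 by ring, Pc_add_two hn,
      show k + 1 + 2 * r + 2 = k + 1 + (2 * r + 2) by ring, card_crossSet_add hn hk h1 h2]
    push_cast [Nat.cast_sub (show 1 ≤ n by omega)]
    rw [ih]
    ring

theorem stmt0 (n N : ℕ) (hn : 2 ≤ n) :
    (N + 2 ≤ phi n → Pc fibSeq n N = 0) ∧
    ((N + 1 = phi n ∨ N = phi n) → (Pc fibSeq n N : ℚ) = (fibW (N + 2) : ℚ) - n) ∧
    (phi n + 1 ≤ N → Even (N + phi n) →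
      (Pc fibSeq n N : ℚ) =
        ((n : ℚ) - 1) / 4 * (N : ℚ) ^ 2
        + (1 / 2) * ((fibW (phi n + 2) : ℚ) - ((n : ℚ) - 1) * (phi n : ℚ)) * (N : ℚ)
        + ((1 - (phi n : ℚ) / 2) * (fibW (phi n + 2) : ℚ)
            + ((n : ℚ) - 1) / 4 * (phi n : ℚ) ^ 2 - (n : ℚ))) ∧
    (phi n + 1 ≤ N → Odd (N + phi n) →
      (Pc fibSeq n N : ℚ) =
        ((n : ℚ) - 1) / 4 * (N : ℚ) ^ 2
        + (1 / 2) * ((fibW (phi n + 2) : ℚ) - ((n : ℚ) - 1) * (phi n : ℚ)) * (N : ℚ)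
        + ((fibW (phi n + 1) : ℚ) + (1 / 2) * (1 - (phi n : ℚ)) * (fibW (phi n + 2) : ℚ)
            + ((n : ℚ) - 1) / 4 * (phi n : ℚ) ^ 2 + (1 - 5 * (n : ℚ)) / 4)) := by
  obtain ⟨hk, h1, h2⟩ := phi_spec n hn
  generalize phi n = k at *
  refine ⟨Pc_eq_zero hn hk h1 N, ?_, ?_, ?_⟩
  · intro h
    have h3 : n ≤ fibW (N + 2) := h2.trans (fibW_mono (by omega))
    rw [Pc_eq_card hn hk h1 (by omega), Nat.cast_sub h3]
  · intro hN he
    obtain ⟨r, rfl⟩ : ∃ r, N = k + 2 * r := by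
      obtain ⟨c, hc⟩ := he
      exact ⟨c - k, by omega⟩
    rw [Pc_even hn hk h1 h2]
    push_cast
    ring
  · intro hN ho
    obtain ⟨r, rfl⟩ : ∃ r, N = k + 1 + 2 * r := by
      obtain ⟨c, hc⟩ := ho
      exact ⟨c - k, by omega⟩
    rw [Pc_odd hn hk h1 h2]
    push_cast
    ring
end

section
/- Let f be the infinite Fibonacci sequence. Then P_f(1,N) = N+1 for all N ≥ 0. Moreover, for n ≥ 2: P_f(n,N) = 0 whenever 0 ≤ N ≤ φ(n)−2, and P_f(n,N) = F_{N+2} − n when N = φ(n)−1. -/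
/-! ### The prefixes `τ^k(0)` and the recurrence for the letters -/

/-- The prefix `τ^k(0)` of the Fibonacci sequence. -/
def fibPref (k : ℕ) : List ℕ := tauWord^[k] [0]

theorem fibPref_succ (k : ℕ) : fibPref (k + 1) = tauWord (fibPref k) := by
  simp only [fibPref, Function.iterate_succ_apply']

/-- Since `τ²(0) = 0 1 2` and `τ` commutes with adding `2` to all letters,
`τ^{k+2}(0)` is `τ^{k+1}(0)` followed by the shifted copy `τ^k(2)` of `τ^k(0)`. -/
theorem fibPref_add_two (k : ℕ) :
    fibPref (k + 2) = fibPref (k + 1) ++ (fibPref k).map (· + 2) := by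
  induction k with
  | zero => simp [fibPref, tauWord, tauLetter]
  | succ k ih =>
    calc fibPref (k + 3) = tauWord (fibPref (k + 2)) := fibPref_succ _
      _ = fibPref (k + 2) ++ (fibPref (k + 1)).map (· + 2) := by
        rw [ih, tauWord_append, tauWord_map_add_two, ← fibPref_succ, ← fibPref_succ, ← ih]

theorem length_fibPref (k : ℕ) : (fibPref k).length = fibW (k + 1) := by
  induction k using fibW.induct with
  | case1 => simp [fibPref, fibW]
  | case2 => simp [fibPref, fibW, tauWord, tauLetter]
  | case3 k h1 h2 =>
    rw [fibPref_add_two, List.length_append, List.length_map, h1, h2]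
    rfl

theorem fibPref_prefix_succ (k : ℕ) : fibPref k <+: fibPref (k + 1) := by
  cases k with
  | zero => simp [fibPref, tauWord, tauLetter]
  | succ k => rw [fibPref_add_two]; exact List.prefix_append _ _

theorem fibPref_prefix_of_le {k m : ℕ} (h : k ≤ m) : fibPref k <+: fibPref m := by
  induction m, h using Nat.le_induction with
  | base => exact List.prefix_rfl
  | succ m _ ih => exact ih.trans (fibPref_prefix_succ m)

theorem getD_eq_of_prefix_left {u v : List ℕ} (h : u <+: v) {n : ℕ} (hn : n < u.length) :
    v.getD n 0 = u.getD n 0 := by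
  obtain ⟨t, rfl⟩ := h
  exact List.getD_append _ _ _ _ hn

/-- Any prefix `τ^k(0)` long enough to contain position `n` can be used to read off `f(n)`. -/
theorem fibSeq_eq {n k : ℕ} (h : n < fibW (k + 1)) : fibSeq n = (fibPref k).getD n 0 := by
  have hn : n < (fibPref (n + 1)).length := by
    have := le_fibW (n + 1 + 1)
    rw [length_fibPref]
    omega
  have hk : n < (fibPref k).length := by rwa [length_fibPref]
  change (fibPref (n + 1)).getD n 0 = _
  rw [← getD_eq_of_prefix_left (fibPref_prefix_of_le (le_max_left (n + 1) k)) hn,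
    ← getD_eq_of_prefix_left (fibPref_prefix_of_le (le_max_right (n + 1) k)) hk]

theorem fibSeq_shift {k j : ℕ} (h : j < fibW (k + 1)) :
    fibSeq (fibW (k + 2) + j) = fibSeq j + 2 := by
  have h1 : fibW (k + 2) + j < fibW (k + 2 + 1) := by
    change _ < fibW (k + 2) + fibW (k + 1)
    omega
  have hj : j < (fibPref k).length := by rwa [length_fibPref]
  rw [fibSeq_eq h1, fibSeq_eq h, fibPref_add_two,
    List.getD_append_right _ _ _ _ (by rw [length_fibPref]; exact Nat.le_add_right _ _), length_fibPref,
    Nat.add_sub_cancel_left]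
  simp [List.getD_eq_getElem?_getD, hj]

/-! ### Positions of large letters -/

/-- The letter `k` occurs for the first time at position `F_{k+1} - 1`,
and no larger letter precedes it. -/
theorem fibSeq_first (k : ℕ) :
    fibSeq (fibW (k + 1) - 1) = k ∧ ∀ p, p < fibW (k + 1) - 1 → fibSeq p < k := by
  induction k using fibW.induct with
  | case1 => simp [fibW, fibSeq_zero]
  | case2 =>
    refine ⟨fibSeq_one, fun p hp => ?_⟩
    simp only [fibW] at hp
    obtain rfl : p = 0 := by omega
    simp [fibSeq_zero]
  | case3 k h1 h2 =>
    have hrec : fibW (k + 2 + 1) = fibW (k + 2) + fibW (k + 1) := rfl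
    have hpos := fibW_pos (k + 1)
    have hpos' := fibW_pos (k + 2)
    simp only [Nat.succ_eq_add_one, Nat.add_assoc, Nat.reduceAdd] at h1 h2 hrec ⊢
    constructor
    · rw [hrec, show fibW (k + 2) + fibW (k + 1) - 1 = fibW (k + 2) + (fibW (k + 1) - 1) by omega,
        fibSeq_shift (by omega), h2.1]
    · intro p hp
      rcases lt_trichotomy p (fibW (k + 2) - 1) with h | h | h
      · have := h1.2 p h
        omega
      · rw [h, h1.1]
        omega
      · obtain ⟨j, rfl⟩ : ∃ j, p = fibW (k + 2) + j := ⟨p - fibW (k + 2), by omega⟩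
        rw [fibSeq_shift (by omega)]
        have := h2.2 j (by omega)
        omega

theorem exists_fibW_le (e : ℕ) (he : 1 ≤ e) :
    ∃ k, 1 ≤ k ∧ fibW k ≤ e ∧ e < fibW (k + 1) := by
  induction e, he using Nat.le_induction with
  | base => exact ⟨1, le_rfl, by simp [fibW], by simp [fibW]⟩
  | succ e _ ih =>
    obtain ⟨k, hk, h1, h2⟩ := ih
    by_cases h : e + 1 < fibW (k + 1)
    · exact ⟨k, hk, by omega, h⟩
    · refine ⟨k + 1, by omega, by omega, ?_⟩
      have := fibW_pos k
      change _ < fibW (k + 1) + fibW k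
      omega

theorem two_le_fibSeq {e : ℕ} (he : 2 ≤ e) : 2 ≤ fibSeq e := by
  obtain ⟨k, hk, h1, h2⟩ := exists_fibW_le e (by omega)
  obtain ⟨j, rfl⟩ : ∃ j, e = fibW k + j := ⟨e - fibW k, by omega⟩
  match k, hk with
  | 1, _ => simp [fibW] at h1 h2 he; omega
  | k + 2, _ =>
    rw [fibSeq_shift]
    · omega
    · change _ < fibW (k + 2) + fibW (k + 1) at h2
      omega

/-- From position `F_{N+2} - 1` on, every window of length `F_{N+1} + 1` contains a letter
exceeding `N`. With `F_k ≤ e < F_{k+1}`, either the window contains position `F_k - 1`, whose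
letter is `k - 1`, or it is the shift by `F_k` of an earlier window, with letters increased by
`2`, so that the claim for `N - 2` applies. -/
theorem exists_large (N : ℕ) : ∀ e, fibW (N + 2) ≤ e + 1 →
    ∃ p, p ≤ e ∧ e ≤ p + fibW (N + 1) ∧ N < fibSeq p := by
  induction N using fibW.induct with
  | case1 =>
    intro e he
    simp only [fibW] at he
    refine ⟨e, le_rfl, by omega, ?_⟩
    rcases Nat.lt_or_ge e 2 with h | h
    · obtain rfl : e = 1 := by omega
      simp [fibSeq_one]
    · have := two_le_fibSeq h
      omega
  | case2 =>
    intro e he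
    simp only [fibW] at he
    have := @two_le_fibSeq e (by omega)
    exact ⟨e, le_rfl, by omega, by omega⟩
  | case3 N _ ih =>
    intro e he
    simp only [Nat.succ_eq_add_one, Nat.add_assoc, Nat.reduceAdd] at he ⊢
    have r4 : fibW (N + 4) = fibW (N + 3) + fibW (N + 2) := rfl
    have r3 : fibW (N + 3) = fibW (N + 2) + fibW (N + 1) := rfl
    have p2 := fibW_pos (N + 2)
    rcases Nat.lt_or_ge e (fibW (N + 4)) with h | h
    · refine ⟨e, le_rfl, by omega, ?_⟩
      have := (fibSeq_first (N + 3)).1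
      rw [show e = fibW (N + 3 + 1) - 1 by simp only [Nat.add_assoc, Nat.reduceAdd]; omega, this]
      omega
    · obtain ⟨k, _, h1, h2⟩ := exists_fibW_le e (by omega)
      have hk : N + 4 ≤ k := by
        by_contra hlt
        have := fibW_mono (show k + 1 ≤ N + 4 by omega)
        omega
      obtain ⟨m, rfl⟩ : ∃ m, k = m + 2 := ⟨k - 2, by omega⟩
      have pm := fibW_pos (m + 2)
      by_cases hin : e < fibW (m + 2) + fibW (N + 3)
      · refine ⟨fibW (m + 2) - 1, by omega, by omega, ?_⟩
        have := (fibSeq_first (m + 1)).1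
        simp only [Nat.add_assoc, Nat.reduceAdd] at this
        rw [this]
        omega
      · obtain ⟨j, rfl⟩ : ∃ j, e = fibW (m + 2) + j := ⟨e - fibW (m + 2), by omega⟩
        have hm : fibW (m + 2 + 1) = fibW (m + 2) + fibW (m + 1) := rfl
        obtain ⟨p, hp1, hp2, hp3⟩ := ih j (by omega)
        refine ⟨fibW (m + 2) + p, by omega, by omega, ?_⟩
        rw [fibSeq_shift (by omega)]
        omega

theorem window_inj_apply {n i i' : ℕ} (h : window n i = window n i') {j : ℕ} (hj : j < n) :
    fibSeq (i + j) = fibSeq (i' + j) :=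
  List.map_inj_left.1 h j (List.mem_range.2 hj)

/-- For `n > F_{N+1}` the factors counted by `P_f(n,N)` are exactly those lying inside the
initial word of length `F_{N+2} - 1`. -/
theorem factorSet_eq {n N : ℕ} (hn : fibW (N + 1) < n) :
    factorSet fibSeq n N = (window n) '' Set.Iio (fibW (N + 2) - n) := by
  ext u
  constructor
  · rintro ⟨⟨i, rfl⟩, hu⟩
    refine ⟨i, ?_, rfl⟩
    by_contra hi
    simp only [Set.mem_Iio, not_lt] at hi
    obtain ⟨p, hp1, hp2, hp3⟩ := exists_large N (i + n - 1) (by omega)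
    have := hu (fibSeq p)
      (List.mem_map.2 ⟨p - i, List.mem_range.2 (by omega), by congr 1; omega⟩)
    omega
  · rintro ⟨i, hi, rfl⟩
    refine ⟨⟨i, rfl⟩, fun x hx => ?_⟩
    simp only [Set.mem_Iio] at hi
    obtain ⟨j, hj, rfl⟩ := List.mem_map.1 hx
    rw [List.mem_range] at hj
    have := (fibSeq_first (N + 1)).2 (i + j) (by simp only [Nat.add_assoc, Nat.reduceAdd]; omega)
    omega

/-- The windows in question all contain the first occurrence of the letter `N`, at position
`F_{N+1} - 1`; its offset in the window determines the starting position. -/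
theorem window_injOn_s3 {n N : ℕ} (hn : fibW (N + 1) < n) :
    Set.InjOn (window n) (Set.Iio (fibW (N + 2) - n)) := by
  have key : ∀ i i' : ℕ, i < i' → i' < fibW (N + 2) - n → window n i ≠ window n i' := by
    intro i i' hlt hi' heq
    have hr : fibW (N + 2) = fibW (N + 1) + fibW N := rfl
    have hm := fibW_mono (show N ≤ N + 1 by omega)
    obtain ⟨hN, hlow⟩ := fibSeq_first N
    have h := window_inj_apply heq (j := fibW (N + 1) - 1 - i') (by omega)
    rw [show i' + (fibW (N + 1) - 1 - i') = fibW (N + 1) - 1 by omega, hN] at h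
    have := hlow (i + (fibW (N + 1) - 1 - i')) (by omega)
    omega
  intro i hi i' hi' heq
  rcases lt_trichotomy i i' with h | h | h
  · exact absurd heq (key i i' h hi')
  · exact h
  · exact absurd heq.symm (key i' i h hi)

theorem Pc_eq {n N : ℕ} (hn : fibW (N + 1) < n) : Pc fibSeq n N = fibW (N + 2) - n := by
  rw [Pc, factorSet_eq hn, Nat.card_image_of_injOn (window_injOn_s3 hn)]
  simp

theorem Pc_one (N : ℕ) : Pc fibSeq 1 N = N + 1 := by
  have h : factorSet fibSeq 1 N = (fun x : ℕ => [x]) '' Set.Iic N := by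
    ext u
    constructor
    · rintro ⟨⟨i, rfl⟩, hu⟩
      exact ⟨fibSeq i, hu _ (by simp), by simp⟩
    · rintro ⟨x, hx, rfl⟩
      exact ⟨⟨fibW (x + 1) - 1, by simp [(fibSeq_first x).1]⟩, by simpa using hx⟩
  rw [Pc, h, Nat.card_image_of_injective (fun a b hab => by simpa using hab)]
  simp

/-! ### The function `φ` -/

theorem bddAbove_phi (n : ℕ) : BddAbove {k | fibW k < n} :=
  ⟨n, fun k hk => (le_fibW k).trans (le_of_lt hk)⟩

theorem fibW_phi_lt {n : ℕ} (hn : 2 ≤ n) : fibW (phi n) < n :=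
  Nat.sSup_mem (s := {k | fibW k < n}) ⟨0, by simp only [Set.mem_ofPred_eq, fibW]; omega⟩
    (bddAbove_phi n)

theorem le_fibW_phi_succ (n : ℕ) : n ≤ fibW (phi n + 1) := by
  by_contra h
  have : phi n + 1 ≤ phi n := le_csSup (bddAbove_phi n) (not_le.1 h)
  omega

theorem stmt3 :
    (∀ N : ℕ, Pc fibSeq 1 N = N + 1) ∧
    (∀ n N : ℕ, 2 ≤ n →
      (N + 2 ≤ phi n → Pc fibSeq n N = 0) ∧
      (N + 1 = phi n → (Pc fibSeq n N : ℤ) = (fibW (N + 2) : ℤ) - n)) := by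
  refine ⟨Pc_one, fun n N hn => ⟨fun h => ?_, fun h => ?_⟩⟩
  · have h2 : fibW (N + 2) < n := (fibW_mono h).trans_lt (fibW_phi_lt hn)
    have h1 := fibW_mono (show N + 1 ≤ N + 2 by omega)
    rw [Pc_eq (by omega)]
    omega
  · have h1 := fibW_phi_lt hn
    have h2 := le_fibW_phi_succ n
    rw [← h] at h1 h2
    rw [Pc_eq h1, Nat.cast_sub h2]
end
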